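/- Let X ∈ ℝ^{n×d} be a matrix every row of which has Euclidean norm at most C_X > 0, and suppose λ_min(XᵀX) ≥ λ̄_min for some λ̄_min ≥ 0. Let k ≥ 1, σ > 0, and set γ := (σ² + λ̄_min)/C_X². Assume γ > 1, and let X' be obtained from X by replacing exactly one row with the zero vector. Then for every α ∈ (1, γ), both D_α(M(X)‖M(X')) ≤ φ(α; k, γ) and D_α(M(X')‖M(X)) ≤ φ(α; k, γ), where M denotes the Gaussian mixing mechanism with parameters k and σ. -/

import Mathlib

open MeasureTheory ProbabilityTheory Matrix

/-- Law of the Gaussian random matrix with i.i.d. standard Gaussian entries. -/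
noncomputable def stdGaussMat (k n : ℕ) : Measure (Fin k → Fin n → ℝ) :=
  Measure.pi fun _ => Measure.pi fun _ => gaussianReal 0 1

/-- The Gaussian mixing mechanism `M(X) = S X + σ ξ` with `S, ξ` independent
matrices of i.i.d. standard Gaussian entries: this is the law of the output. -/
noncomputable def gaussMix {n d : ℕ} (k : ℕ) (σ : ℝ) (X : Matrix (Fin n) (Fin d) ℝ) :
    Measure (Fin k → Fin d → ℝ) :=
  Measure.map (fun p => fun i j => (∑ l, p.1 i l * X l j) + σ * p.2 i j)
    ((stdGaussMat k n).prod (stdGaussMat k d))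

/-- The `α`-Rényi divergence `D_α(P‖Q) = (α-1)⁻¹ log ∫ (dP/dQ)^α dQ`. -/
noncomputable def renyiDiv {Ω : Type*} [MeasurableSpace Ω] (α : ℝ) (P Q : Measure Ω) : ℝ :=
  (α - 1)⁻¹ * Real.log (∫ x, ((P.rnDeriv Q) x).toReal ^ α ∂Q)

/-- The privacy curve `φ(α; k, ζ)`. -/
noncomputable def phi (α k ζ : ℝ) : ℝ :=
  k * α / (2 * (α - 1)) * Real.log (1 - 1 / ζ)
    - k / (2 * (α - 1)) * Real.log (1 - α / ζ)

/-- Minimal eigenvalue of a (Hermitian) real matrix. -/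
noncomputable def lamMin {d : ℕ} (A : Matrix (Fin d) (Fin d) ℝ) : ℝ :=
  if h : A.IsHermitian then ⨅ i, h.eigenvalues i else 0

/-- Law of a single row of the output of the Gaussian mixing mechanism. -/
noncomputable def gaussMixRow {n d : ℕ} (σ : ℝ) (X : Matrix (Fin n) (Fin d) ℝ) :
    Measure (Fin d → ℝ) :=
  Measure.map (fun p j => (∑ l, p.1 l * X l j) + σ * p.2 j)
    ((Measure.pi fun _ : Fin n => gaussianReal 0 1).prod
      (Measure.pi fun _ : Fin d => gaussianReal 0 1))

instance {n d : ℕ} (σ : ℝ) (X : Matrix (Fin n) (Fin d) ℝ) :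
    IsProbabilityMeasure (gaussMixRow σ X) :=
  Measure.isProbabilityMeasure_map (by fun_prop)

/-- The rows of the output of the Gaussian mixing mechanism are i.i.d. -/
lemma gaussMix_eq_pi {n d : ℕ} (k : ℕ) (σ : ℝ) (X : Matrix (Fin n) (Fin d) ℝ) :
    gaussMix k σ X = Measure.pi fun _ => gaussMixRow σ X := by
  have h := measurePreserving_arrowProdEquivProdArrow (Fin n → ℝ) (Fin d → ℝ) (Fin k)
    (fun _ => Measure.pi fun _ => gaussianReal 0 1) (fun _ => Measure.pi fun _ => gaussianReal 0 1)
  rw [gaussMix, stdGaussMat, stdGaussMat, ← h.map_eq, Measure.map_map (by fun_prop) h.measurable]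
  unfold gaussMixRow
  have : ∀ _ : Fin k, SigmaFinite (Measure.map
      (fun (p : (Fin n → ℝ) × (Fin d → ℝ)) j => (∑ l, p.1 l * X l j) + σ * p.2 j)
    ((Measure.pi fun _ : Fin n => gaussianReal 0 1).prod
      (Measure.pi fun _ : Fin d => gaussianReal 0 1))) := fun _ => by
    change SigmaFinite (gaussMixRow σ X)
    infer_instance
  rw [← Measure.pi_map_pi (fun _ => by fun_prop)]
  rfl

lemma charFunDual_gaussianReal_zero (v : NNReal) (L : StrongDual ℝ ℝ) :
    charFunDual (gaussianReal 0 v) L = Complex.exp (((-(v * L 1 ^ 2) / 2 : ℝ)) : ℂ) := by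
  rw [charFunDual_eq_charFun_map_one, gaussianReal_map_continuousLinearMap, charFun_gaussianReal]
  congr 1
  simp [Real.coe_toNNReal _ (sq_nonneg (L 1))]
  ring

lemma charFunDual_pi_gaussianReal {m : ℕ} (L : StrongDual ℝ (Fin m → ℝ)) :
    charFunDual (Measure.pi fun _ : Fin m => gaussianReal 0 1) L
      = Complex.exp ((-(∑ j, L (Pi.single j 1) ^ 2) / 2 : ℝ) : ℂ) := by
  rw [charFunDual_pi]
  simp_rw [charFunDual_gaussianReal_zero]
  rw [← Complex.exp_sum, ← Complex.ofReal_sum]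
  congr 2
  rw [← Finset.sum_neg_distrib, Finset.sum_div]
  exact Finset.sum_congr rfl fun j _ => by simp

/-- The quadratic form of `XᵀX + σ²I`. -/
lemma dotProduct_cov_mulVec {n d : ℕ} (σ : ℝ) (X : Matrix (Fin n) (Fin d) ℝ) (l : Fin d → ℝ) :
    l ⬝ᵥ ((Xᵀ * X + σ ^ 2 • 1) *ᵥ l) = ∑ m, (X *ᵥ l) m ^ 2 + σ ^ 2 * (l ⬝ᵥ l) := by
  rw [Matrix.add_mulVec, dotProduct_add, ← Matrix.mulVec_mulVec, Matrix.dotProduct_mulVec,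
    Matrix.vecMul_transpose, Matrix.smul_mulVec, Matrix.one_mulVec, dotProduct_smul]
  simp only [dotProduct, smul_eq_mul, ← sq]

/-- A row of the mechanism is centered Gaussian with covariance `XᵀX + σ²I`. -/
lemma charFunDual_gaussMixRow {n d : ℕ} (σ : ℝ) (X : Matrix (Fin n) (Fin d) ℝ)
    (L : StrongDual ℝ (Fin d → ℝ)) (l : Fin d → ℝ) (hL : ∀ y, L y = y ⬝ᵥ l) :
    charFunDual (gaussMixRow σ X) L
      = Complex.exp ((-(l ⬝ᵥ ((Xᵀ * X + σ ^ 2 • 1) *ᵥ l)) / 2 : ℝ) : ℂ) := by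
  let T : ((Fin n → ℝ) × (Fin d → ℝ)) →L[ℝ] (Fin d → ℝ) := LinearMap.toContinuousLinearMap
    ((Matrix.vecMulLinear X).comp (LinearMap.fst ℝ _ _) + σ • LinearMap.snd ℝ _ _)
  have hT : gaussMixRow σ X = Measure.map T
      ((Measure.pi fun _ : Fin n => gaussianReal 0 1).prod
      (Measure.pi fun _ : Fin d => gaussianReal 0 1)) := by
    unfold gaussMixRow
    congr 1
  rw [hT, charFunDual_map, charFunDual_prod, charFunDual_pi_gaussianReal,
    charFunDual_pi_gaussianReal, ← Complex.exp_add, ← Complex.ofReal_add]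
  congr 2
  have h1 : ∀ j, (L.comp T).comp (.inl ℝ _ _) (Pi.single j 1) = (X *ᵥ l) j := fun j => by
    simp [T, hL, Matrix.mulVec, Matrix.row]
  have h2 : ∀ j, (L.comp T).comp (.inr ℝ _ _) (Pi.single j 1) = σ * l j := fun j => by
    simp [T, hL]
  simp_rw [h1, h2, dotProduct_cov_mulVec]
  simp only [dotProduct, mul_pow, ← Finset.mul_sum, ← sq]
  ring

/-- The product of measures with densities has the product density. -/
lemma pi_withDensity {ι E : Type*} [Fintype ι] [MeasurableSpace E] (ν : Measure E)
    [IsProbabilityMeasure ν] (f : E → ENNReal) (hf : Measurable f)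
    [SigmaFinite (ν.withDensity f)] :
    Measure.pi (fun _ : ι => ν.withDensity f)
      = (Measure.pi fun _ : ι => ν).withDensity fun y => ∏ i, f (y i) := by
  refine Measure.pi_eq fun s hs => ?_
  rw [withDensity_apply _ (MeasurableSet.univ_pi hs),
    ← lintegral_indicator (MeasurableSet.univ_pi hs)]
  have h : (Set.univ.pi s).indicator (fun y : ι → E => ∏ i, f (y i))
      = fun y => ∏ i, (s i).indicator f (y i) := by
    ext y
    by_cases hy : y ∈ Set.univ.pi s
    · rw [Set.indicator_of_mem hy]
      exact Finset.prod_congr rfl fun i _ => by rw [Set.indicator_of_mem (hy i trivial)]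
    · rw [Set.indicator_of_notMem hy]
      simp only [Set.mem_pi, Set.mem_univ, true_imp_iff, not_forall] at hy
      obtain ⟨i, hi⟩ := hy
      rw [Finset.prod_eq_zero (Finset.mem_univ i)]
      rw [Set.indicator_of_notMem hi]
  have hm : ∀ i, Measurable ((s i).indicator f) := fun i => hf.indicator (hs i)
  rw [h, lintegral_prod_eq_prod_lintegral_of_indepFun Finset.univ
    (fun i (y : ι → E) => (s i).indicator f (y i))
    (iIndepFun_pi (μ := fun _ => ν) fun i => (hm i).aemeasurable)
    (fun i => (hm i).comp (measurable_pi_apply i))]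
  refine Finset.prod_congr rfl fun i _ => ?_
  rw [(measurePreserving_eval (fun _ : ι => ν) i).lintegral_comp (hm i),
    lintegral_indicator (hs i), withDensity_apply _ (hs i)]

/-- Rényi divergence of a power of a measure with respect to the power of a base measure. -/
lemma renyiDiv_pi_withDensity {E : Type*} [MeasurableSpace E] (k : ℕ) (α : ℝ) (ν : Measure E)
    [IsProbabilityMeasure ν] (g : E → ℝ) (hg : Measurable g) (hg0 : ∀ y, 0 ≤ g y)
    [SigmaFinite (ν.withDensity fun y => ENNReal.ofReal (g y))] :
    renyiDiv α (Measure.pi fun _ : Fin k => ν.withDensity fun y => ENNReal.ofReal (g y))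
        (Measure.pi fun _ : Fin k => ν)
      = (α - 1)⁻¹ * (k * Real.log (∫ y, g y ^ α ∂ν)) := by
  rw [renyiDiv, pi_withDensity ν _ (by fun_prop), ← Real.log_pow]
  congr 2
  have h := Measure.rnDeriv_withDensity (Measure.pi fun _ : Fin k => ν)
    (f := fun y => ∏ i, ENNReal.ofReal (g (y i))) (by fun_prop)
  rw [integral_congr_ae (g := fun y => ∏ i, g (y i) ^ α)]
  · rw [integral_fintype_prod_eq_pow (fun y => g y ^ α), Fintype.card_fin]
  · filter_upwards [h] with y hy
    rw [hy, ← ENNReal.ofReal_prod_of_nonneg fun i _ => hg0 _,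
      ENNReal.toReal_ofReal (Finset.prod_nonneg fun i _ => hg0 _),
      Real.finsetProd_rpow _ _ fun i _ => hg0 _]

/-- A density in the variable `t` passes through the map `(r, t) ↦ r + t • a`, provided `t` can
be recovered linearly from the sum. -/
lemma map_add_smul_prod_withDensity {E : Type*} [NormedAddCommGroup E] [NormedSpace ℝ E]
    [MeasurableSpace E] [BorelSpace E] [SecondCountableTopology E]
    (ρ : Measure E) [IsProbabilityMeasure ρ] (τ : Measure ℝ) [IsProbabilityMeasure τ]
    (w : StrongDual ℝ E) (a : E) (ha : w a = 1) (hρ : ∀ᵐ r ∂ρ, w r = 0)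
    (f : ℝ → ENNReal) (hf : Measurable f) [SFinite (τ.withDensity f)] :
    (ρ.prod (τ.withDensity f)).map (fun p => p.1 + p.2 • a)
      = ((ρ.prod τ).map fun p => p.1 + p.2 • a).withDensity fun y => f (w y) := by
  ext s hs
  have hm : Measurable fun p : E × ℝ => p.1 + p.2 • a := by fun_prop
  have hfw : Measurable fun y => f (w y) := by fun_prop
  have h2 : ∀ᵐ p ∂(ρ.prod τ), w p.1 = 0 := Measure.quasiMeasurePreserving_fst.ae hρ
  rw [prod_withDensity_right hf, Measure.map_apply hm hs, withDensity_apply _ (hm hs),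
    withDensity_apply _ hs, setLIntegral_map hs hfw hm]
  refine setLIntegral_congr_fun_ae (hm hs) ?_
  filter_upwards [h2] with p hp _
  simp [hp, ha]

lemma map_dual_map_add_smul_prod {E : Type*} [NormedAddCommGroup E] [NormedSpace ℝ E]
    [MeasurableSpace E] [BorelSpace E] [SecondCountableTopology E]
    (ρ : Measure E) [IsProbabilityMeasure ρ] (τ : Measure ℝ) [IsProbabilityMeasure τ]
    (w : StrongDual ℝ E) (a : E) (ha : w a = 1) (hρ : ∀ᵐ r ∂ρ, w r = 0) :
    ((ρ.prod τ).map fun p => p.1 + p.2 • a).map w = τ := by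
  have h2 : ∀ᵐ p ∂(ρ.prod τ), w p.1 = 0 := Measure.quasiMeasurePreserving_fst.ae hρ
  rw [Measure.map_map (by fun_prop) (by fun_prop),
    Measure.map_congr (g := Prod.snd) (by filter_upwards [h2] with p hp; simp [hp, ha])]
  simp

lemma dotProduct_cov_updateRow_mulVec {n d : ℕ} (σ : ℝ) (X : Matrix (Fin n) (Fin d) ℝ)
    (i : Fin n) (l : Fin d → ℝ) :
    l ⬝ᵥ (((X.updateRow i 0)ᵀ * X.updateRow i 0 + σ ^ 2 • 1) *ᵥ l)
      = l ⬝ᵥ ((Xᵀ * X + σ ^ 2 • 1) *ᵥ l) - (l ⬝ᵥ X i) ^ 2 := by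
  rw [dotProduct_cov_mulVec, dotProduct_cov_mulVec,
    ← Finset.add_sum_erase _ _ (Finset.mem_univ i),
    ← Finset.add_sum_erase Finset.univ (fun m => (X *ᵥ l) m ^ 2) (Finset.mem_univ i)]
  have h : ∀ m ∈ Finset.univ.erase i, (X.updateRow i 0 *ᵥ l) m ^ 2 = (X *ᵥ l) m ^ 2 :=
    fun m hm => by
      simp only [Matrix.mulVec, Matrix.updateRow_ne (Finset.ne_of_mem_erase hm)]
  rw [Finset.sum_congr rfl h]
  have h0 : (X.updateRow i 0 *ᵥ l) i = 0 := by
    simp only [Matrix.mulVec, Matrix.updateRow_self, zero_dotProduct]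
  have h1 : (X *ᵥ l) i = l ⬝ᵥ X i := dotProduct_comm _ _
  rw [h0, h1]
  ring

/-- The functional `y ↦ ⟨y, w⟩`. -/
noncomputable def dotProductDual {d : ℕ} (w : Fin d → ℝ) : StrongDual ℝ (Fin d → ℝ) :=
  LinearMap.toContinuousLinearMap
    { toFun := fun y => y ⬝ᵥ w
      map_add' := fun y z => add_dotProduct y z w
      map_smul' := fun c y => smul_dotProduct c y w }

@[simp]
lemma dotProductDual_apply {d : ℕ} (w y : Fin d → ℝ) : dotProductDual w y = y ⬝ᵥ w := rfl

lemma exists_dotProduct_eq {d : ℕ} (L : StrongDual ℝ (Fin d → ℝ)) :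
    ∃ l : Fin d → ℝ, ∀ y, L y = y ⬝ᵥ l := by
  refine ⟨fun j => L (Pi.single j 1), fun y => ?_⟩
  conv_lhs => rw [pi_eq_sum_univ' y]
  simp [dotProduct]

/-- The law of the component of a row of the mechanism complementary to the direction `a`,
along the functional `w`. -/
noncomputable def gaussMixRowResidual {n d : ℕ} (σ : ℝ) (X : Matrix (Fin n) (Fin d) ℝ)
    (w a : Fin d → ℝ) : Measure (Fin d → ℝ) :=
  (gaussMixRow σ X).map (ContinuousLinearMap.id ℝ (Fin d → ℝ) - (dotProductDual w).smulRight a)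

instance {n d : ℕ} (σ : ℝ) (X : Matrix (Fin n) (Fin d) ℝ) (w a : Fin d → ℝ) :
    IsProbabilityMeasure (gaussMixRowResidual σ X w a) :=
  Measure.isProbabilityMeasure_map (by fun_prop)

lemma ae_gaussMixRowResidual {n d : ℕ} (σ : ℝ) (X : Matrix (Fin n) (Fin d) ℝ)
    (w a : Fin d → ℝ) (ha : a ⬝ᵥ w = 1) :
    ∀ᵐ r ∂(gaussMixRowResidual σ X w a), dotProductDual w r = 0 := by
  rw [gaussMixRowResidual, ae_map_iff (by fun_prop)
    (measurableSet_eq_fun (by fun_prop) measurable_const)]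
  refine Filter.Eventually.of_forall fun y => ?_
  simp [sub_dotProduct, smul_dotProduct, ha]

/-- If `Y` has covariance differing from that of `X` only along `x`, then a row of `M(Y)` is the
independent sum of the residual of `M(X)` and a Gaussian multiple of `x`. -/
lemma gaussMixRow_eq_map_residual {n d : ℕ} (σ : ℝ) (X Y : Matrix (Fin n) (Fin d) ℝ)
    (w x : Fin d → ℝ) (hw : (Xᵀ * X + σ ^ 2 • 1) *ᵥ w = x) (hs : w ⬝ᵥ x ≠ 0) (u : NNReal)
    (hY : ∀ l, l ⬝ᵥ ((Yᵀ * Y + σ ^ 2 • 1) *ᵥ l) = l ⬝ᵥ ((Xᵀ * X + σ ^ 2 • 1) *ᵥ l)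
      - (l ⬝ᵥ x) ^ 2 / (w ⬝ᵥ x) + u * (l ⬝ᵥ x) ^ 2 / (w ⬝ᵥ x) ^ 2) :
    gaussMixRow σ Y = ((gaussMixRowResidual σ X w ((w ⬝ᵥ x)⁻¹ • x)).prod (gaussianReal 0 u)).map
      (fun p => p.1 + p.2 • ((w ⬝ᵥ x)⁻¹ • x)) := by
  set s := w ⬝ᵥ x with hsdef
  set a := s⁻¹ • x with hadef
  let T : ((Fin d → ℝ) × ℝ) →L[ℝ] (Fin d → ℝ) :=
    .fst ℝ _ _ + (ContinuousLinearMap.snd ℝ _ _).smulRight a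
  change _ = Measure.map T _
  have : IsProbabilityMeasure (Measure.map T
      ((gaussMixRowResidual σ X w a).prod (gaussianReal 0 u))) :=
    Measure.isProbabilityMeasure_map (by fun_prop)
  refine Measure.ext_of_charFunDual (funext fun L => ?_)
  obtain ⟨l, hl⟩ := exists_dotProduct_eq L
  have hla : a ⬝ᵥ l = (l ⬝ᵥ x) / s := by
    rw [hadef, smul_dotProduct, dotProduct_comm, smul_eq_mul, div_eq_inv_mul]
  rw [charFunDual_map, charFunDual_prod, gaussMixRowResidual, charFunDual_map,
    charFunDual_gaussMixRow σ Y L l hl, charFunDual_gaussianReal_zero,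
    charFunDual_gaussMixRow σ X _ (l - ((l ⬝ᵥ x) / s) • w), ← Complex.exp_add,
    ← Complex.ofReal_add]
  · congr 2
    have h1 : (L.comp T).comp (.inr ℝ _ _) 1 = (l ⬝ᵥ x) / s := by
      simp [T, hl, hla]
    have hsymm : w ⬝ᵥ ((Xᵀ * X + σ ^ 2 • 1) *ᵥ l) = l ⬝ᵥ x := by
      rw [Matrix.dotProduct_mulVec, ← Matrix.mulVec_transpose, dotProduct_comm, ← hw]
      congr 2
      simp [Matrix.transpose_mul]
    rw [h1, hY, Matrix.mulVec_sub, Matrix.mulVec_smul, hw, sub_dotProduct, dotProduct_sub,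
      dotProduct_sub, smul_dotProduct, smul_dotProduct, dotProduct_smul, dotProduct_smul,
      hsymm, ← hsdef]
    simp only [smul_eq_mul]
    field_simp
    ring
  · intro y
    simp [T, hl, dotProduct_sub, dotProduct_smul, hla]
    ring

/-- Ratio of the densities of two centered real Gaussian measures. -/
noncomputable def gaussRatio (u₁ u₂ : NNReal) (t : ℝ) : ℝ :=
  √(u₂ / u₁) * Real.exp (-((u₁ : ℝ)⁻¹ - (u₂ : ℝ)⁻¹) / 2 * t ^ 2)

lemma measurable_gaussRatio (u₁ u₂ : NNReal) : Measurable (gaussRatio u₁ u₂) := by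
  unfold gaussRatio
  fun_prop

lemma gaussRatio_nonneg (u₁ u₂ : NNReal) (t : ℝ) : 0 ≤ gaussRatio u₁ u₂ t := by
  unfold gaussRatio
  positivity

lemma gaussianReal_eq_withDensity_gaussRatio {u₁ u₂ : NNReal} (h₁ : 0 < u₁) (h₂ : 0 < u₂) :
    gaussianReal 0 u₁
      = (gaussianReal 0 u₂).withDensity fun t => ENNReal.ofReal (gaussRatio u₁ u₂ t) := by
  have h₁' : (0 : ℝ) < u₁ := h₁
  have h₂' : (0 : ℝ) < u₂ := h₂
  rw [gaussianReal_of_var_ne_zero _ h₁.ne', gaussianReal_of_var_ne_zero _ h₂.ne',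
    ← withDensity_mul _ (by fun_prop) (measurable_gaussRatio u₁ u₂).ennreal_ofReal]
  congr 1
  ext t
  rw [Pi.mul_apply, gaussianPDF, gaussianPDF, ← ENNReal.ofReal_mul (gaussianPDFReal_nonneg _ _ _)]
  congr 1
  rw [gaussianPDFReal, gaussianPDFReal, gaussRatio, mul_mul_mul_comm, ← Real.exp_add]
  congr 1
  · rw [Real.sqrt_mul (by positivity) (u₁ : ℝ), Real.sqrt_mul (by positivity) (u₂ : ℝ),
      Real.sqrt_div (by positivity)]
    field_simp
  · congr 1
    field_simp
    ring

lemma log_integral_gaussRatio_rpow {u₁ u₂ : NNReal} (h₁ : 0 < u₁) (h₂ : 0 < u₂) (α : ℝ)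
    (h : 0 < α * (u₂ / u₁) - (α - 1)) :
    Real.log (∫ t, gaussRatio u₁ u₂ t ^ α ∂(gaussianReal 0 u₂))
      = (α * Real.log (u₂ / u₁) - Real.log (α * (u₂ / u₁) - (α - 1))) / 2 := by
  have h₁' : (0 : ℝ) < u₁ := h₁
  have h₂' : (0 : ℝ) < u₂ := h₂
  set r : ℝ := u₂ / u₁ with hr
  have hr0 : 0 < r := by positivity
  have hint : ∫ t, gaussRatio u₁ u₂ t ^ α ∂(gaussianReal 0 u₂)
      = (√r) ^ α * (√(α * r - (α - 1)))⁻¹ := by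
    rw [integral_gaussianReal_eq_integral_smul h₂.ne']
    have hpt : ∀ t : ℝ, gaussianPDFReal 0 u₂ t • gaussRatio u₁ u₂ t ^ α
        = ((√(2 * Real.pi * u₂))⁻¹ * (√r) ^ α)
          * Real.exp (-((α * r - (α - 1)) / (2 * u₂)) * t ^ 2) := fun t => by
      rw [gaussRatio, gaussianPDFReal, Real.mul_rpow (by positivity) (by positivity),
        ← Real.exp_mul, smul_eq_mul, mul_mul_mul_comm, ← Real.exp_add]
      congr 2
      rw [hr]
      field_simp
      ring
    simp_rw [hpt]
    rw [integral_const_mul, integral_gaussian, mul_comm (√(2 * Real.pi * u₂))⁻¹, mul_assoc]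
    congr 1
    rw [← Real.sqrt_inv, ← Real.sqrt_mul (by positivity), ← Real.sqrt_inv]
    congr 1
    field_simp
  rw [hint, Real.log_mul (by positivity) (by positivity), Real.log_rpow (by positivity),
    Real.log_inv, Real.log_sqrt hr0.le, Real.log_sqrt h.le]
  ring

/-- Rényi divergence of powers of two laws that differ by a Gaussian factor along one direction. -/
lemma renyiDiv_pi_map_add_smul {E : Type*} [NormedAddCommGroup E] [NormedSpace ℝ E]
    [MeasurableSpace E] [BorelSpace E] [SecondCountableTopology E]
    (ρ : Measure E) [IsProbabilityMeasure ρ] (w : StrongDual ℝ E) (a : E) (ha : w a = 1)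
    (hρ : ∀ᵐ r ∂ρ, w r = 0) {u₁ u₂ : NNReal} (h₁ : 0 < u₁) (h₂ : 0 < u₂) (k : ℕ) (α : ℝ)
    (h : 0 < α * (u₂ / u₁) - (α - 1)) :
    renyiDiv α
        (Measure.pi fun _ : Fin k => (ρ.prod (gaussianReal 0 u₁)).map fun p => p.1 + p.2 • a)
        (Measure.pi fun _ : Fin k => (ρ.prod (gaussianReal 0 u₂)).map fun p => p.1 + p.2 • a)
      = k / (2 * (α - 1)) * (α * Real.log (u₂ / u₁) - Real.log (α * (u₂ / u₁) - (α - 1))) := by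
  have hm := measurable_gaussRatio u₁ u₂
  have hprob : ∀ u : NNReal, IsProbabilityMeasure
      ((ρ.prod (gaussianReal 0 u)).map fun p : E × ℝ => p.1 + p.2 • a) :=
    fun u => Measure.isProbabilityMeasure_map (by fun_prop)
  have : SFinite ((gaussianReal 0 u₂).withDensity
      fun t => ENNReal.ofReal (gaussRatio u₁ u₂ t)) := by
    rw [← gaussianReal_eq_withDensity_gaussRatio h₁ h₂]
    infer_instance
  have hd : (ρ.prod (gaussianReal 0 u₁)).map (fun p => p.1 + p.2 • a)
      = ((ρ.prod (gaussianReal 0 u₂)).map fun p => p.1 + p.2 • a).withDensity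
        fun y => ENNReal.ofReal (gaussRatio u₁ u₂ (w y)) := by
    rw [gaussianReal_eq_withDensity_gaussRatio h₁ h₂]
    exact map_add_smul_prod_withDensity ρ (gaussianReal 0 u₂) w a ha hρ _ hm.ennreal_ofReal
  have : IsProbabilityMeasure (((ρ.prod (gaussianReal 0 u₂)).map
      fun p => p.1 + p.2 • a).withDensity
        fun y => ENNReal.ofReal (gaussRatio u₁ u₂ (w y))) := hd ▸ hprob u₁
  have hI : ∫ y, gaussRatio u₁ u₂ (w y) ^ α
        ∂((ρ.prod (gaussianReal 0 u₂)).map fun p => p.1 + p.2 • a)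
      = ∫ t, gaussRatio u₁ u₂ t ^ α ∂(gaussianReal 0 u₂) := by
    conv_rhs => rw [← map_dual_map_add_smul_prod ρ (gaussianReal 0 u₂) w a ha hρ]
    exact (integral_map (φ := w) (by fun_prop) (hm.pow_const α).aestronglyMeasurable).symm
  rw [hd, renyiDiv_pi_withDensity k α _ _ (by fun_prop) (fun y => gaussRatio_nonneg _ _ _), hI,
    log_integral_gaussRatio_rpow h₁ h₂ α h, mul_comm (2 : ℝ), div_mul_eq_div_div]
  ring

/-- The function `α log (1 - s) - log (1 - α s)` is nondecreasing in `s`. -/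
lemma log_one_sub_mono {α s z : ℝ} (hα : 1 < α) (hs : 0 ≤ s) (hsz : s ≤ z) (hz : α * z < 1) :
    α * Real.log (1 - s) - Real.log (1 - α * s)
      ≤ α * Real.log (1 - z) - Real.log (1 - α * z) := by
  have hpos : ∀ t ∈ Set.Icc 0 z, 0 < 1 - α * t ∧ 0 < 1 - t := fun t ht => by
    constructor <;> nlinarith [ht.1, ht.2]
  have hder : ∀ t ∈ Set.Icc 0 z, HasDerivAt
      (fun t => α * Real.log (1 - t) - Real.log (1 - α * t))
      (α * (-1 / (1 - t)) - -(α * 1) / (1 - α * t)) t := fun t ht =>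
    ((((hasDerivAt_id t).const_sub 1).log (hpos t ht).2.ne').const_mul α).sub
      ((((hasDerivAt_id t).const_mul α).const_sub 1).log (hpos t ht).1.ne')
  have hmono : MonotoneOn (fun t => α * Real.log (1 - t) - Real.log (1 - α * t))
      (Set.Icc 0 z) := by
    refine monotoneOn_of_hasDerivWithinAt_nonneg (convex_Icc 0 z)
      (fun t ht => (hder t ht).continuousAt.continuousWithinAt)
      (fun t ht => (hder t (interior_subset ht)).hasDerivWithinAt) fun t ht => ?_
    have ht' := interior_subset ht
    obtain ⟨h1, h2⟩ := hpos t ht'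
    have : α / (1 - t) ≤ α / (1 - α * t) :=
      div_le_div_of_nonneg_left (by linarith) h1 (by nlinarith [ht'.1])
    have e : α * (-1 / (1 - t)) - -(α * 1) / (1 - α * t)
        = α / (1 - α * t) - α / (1 - t) := by ring
    rw [e]
    linarith
  exact hmono ⟨hs, hsz⟩ ⟨hs.trans hsz, le_rfl⟩ hsz

/-- Removing a direction of variance costs at least as much as adding it. -/
lemma log_one_sub_reverse_le {α s : ℝ} (hα : 1 < α) (hs : 0 ≤ s) (hs1 : α * s < 1) :
    (1 - α) * Real.log (1 - s) - Real.log (1 + (α - 1) * s)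
      ≤ α * Real.log (1 - s) - Real.log (1 - α * s) := by
  have hpos : ∀ t ∈ Set.Icc 0 s, 0 < 1 - α * t ∧ 0 < 1 - t ∧ 0 < 1 + (α - 1) * t :=
    fun t ht => by
      refine ⟨?_, ?_, ?_⟩ <;> nlinarith [ht.1, ht.2, mul_nonneg (sub_nonneg.2 hα.le) ht.1]
  have hder : ∀ t ∈ Set.Icc 0 s, HasDerivAt
      (fun t => (2 * α - 1) * Real.log (1 - t) + Real.log (1 + (α - 1) * t)
        - Real.log (1 - α * t))
      ((2 * α - 1) * (-1 / (1 - t)) + ((α - 1) * 1) / (1 + (α - 1) * t)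
        - -(α * 1) / (1 - α * t)) t := fun t ht =>
    (((((hasDerivAt_id t).const_sub 1).log (hpos t ht).2.1.ne').const_mul (2 * α - 1)).add
      ((((hasDerivAt_id t).const_mul (α - 1)).const_add 1).log (hpos t ht).2.2.ne')).sub
      ((((hasDerivAt_id t).const_mul α).const_sub 1).log (hpos t ht).1.ne')
  have hmono : MonotoneOn (fun t => (2 * α - 1) * Real.log (1 - t)
      + Real.log (1 + (α - 1) * t) - Real.log (1 - α * t)) (Set.Icc 0 s) := by
    refine monotoneOn_of_hasDerivWithinAt_nonneg (convex_Icc 0 s)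
      (fun t ht => (hder t ht).continuousAt.continuousWithinAt)
      (fun t ht => (hder t (interior_subset ht)).hasDerivWithinAt) fun t ht => ?_
    obtain ⟨h1, h2, h3⟩ := hpos t (interior_subset ht)
    have hsq : 0 ≤ α * (α - 1) * t ^ 2 :=
      mul_nonneg (mul_nonneg (by linarith) (by linarith)) (sq_nonneg t)
    have : (2 * α - 1) / (1 - t) ≤ (2 * α - 1) / ((1 + (α - 1) * t) * (1 - α * t)) :=
      div_le_div_of_nonneg_left (by linarith) (by positivity) (by linarith)
    have e : (α - 1) / (1 + (α - 1) * t) + α / (1 - α * t)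
        = (2 * α - 1) / ((1 + (α - 1) * t) * (1 - α * t)) := by
      rw [div_add_div _ _ h3.ne' h1.ne']
      congr 1
      ring
    rw [← e] at this
    have e2 : (2 * α - 1) * (-1 / (1 - t)) = -((2 * α - 1) / (1 - t)) := by ring
    rw [mul_one, mul_one, e2, neg_div]
    linarith
  have h := hmono ⟨le_rfl, hs⟩ ⟨hs, le_rfl⟩ hs
  simp only [sub_zero, mul_zero, add_zero, Real.log_one] at h
  linarith

/-- The minimal eigenvalue bounds the quadratic form from below. -/
lemma lamMin_mul_dotProduct_le {d : ℕ} {A : Matrix (Fin d) (Fin d) ℝ} (hA : A.IsHermitian)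
    {c : ℝ} (hc : c ≤ lamMin A) (w : Fin d → ℝ) : c * (w ⬝ᵥ w) ≤ w ⬝ᵥ (A *ᵥ w) := by
  rw [lamMin, dif_pos hA] at hc
  have hce : ∀ i, c ≤ hA.eigenvalues i := fun i =>
    hc.trans (ciInf_le (Set.finite_range _).bddBelow i)
  have hsub : A - c • 1 = Unitary.conjStarAlgAut ℝ _ hA.eigenvectorUnitary
      (diagonal fun i => hA.eigenvalues i - c) := by
    have hd : (diagonal fun i => hA.eigenvalues i - c)
        = diagonal (RCLike.ofReal ∘ hA.eigenvalues : Fin d → ℝ) - c • 1 := by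
      ext i j
      by_cases h : i = j <;> simp [h]
    rw [hd, map_sub, ← hA.spectral_theorem, map_smul, map_one]
  have hps : (A - c • 1).PosSemidef := by
    rw [hsub]
    simpa [Unitary.isUnit_coe.posSemidef_star_right_conjugate_iff,
      posSemidef_diagonal_iff, Pi.le_def] using hce
  have h := hps.dotProduct_mulVec_nonneg w
  simp only [star_trivial, Matrix.sub_mulVec, Matrix.smul_mulVec, Matrix.one_mulVec,
    dotProduct_sub, dotProduct_smul, smul_eq_mul] at h
  linarith

/-- The covariance equation `(XᵀX + σ²I) w = x` is solvable, and the leverage `⟨w, x⟩` of `x` is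
controlled by the norm of `x` and the minimal eigenvalue. -/
lemma exists_cov_mulVec_eq {n d : ℕ} {σ lamBar : ℝ} (hσ : 0 < σ) (hlamBar : 0 ≤ lamBar)
    (X : Matrix (Fin n) (Fin d) ℝ) (hlam : lamBar ≤ lamMin (Xᵀ * X)) (x : Fin d → ℝ)
    (hx : x ≠ 0) :
    ∃ w : Fin d → ℝ, (Xᵀ * X + σ ^ 2 • 1) *ᵥ w = x ∧ 0 < w ⬝ᵥ x ∧
      w ⬝ᵥ x ≤ (x ⬝ᵥ x) / (σ ^ 2 + lamBar) := by
  have hH : (Xᵀ * X).IsHermitian := by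
    simpa using Matrix.isHermitian_conjTranspose_mul_self X
  have hc : 0 < σ ^ 2 + lamBar := by positivity
  have hq : ∀ v : Fin d → ℝ,
      (σ ^ 2 + lamBar) * (v ⬝ᵥ v) ≤ v ⬝ᵥ ((Xᵀ * X + σ ^ 2 • 1) *ᵥ v) := fun v => by
    have h := lamMin_mul_dotProduct_le hH hlam v
    rw [Matrix.add_mulVec, dotProduct_add, Matrix.smul_mulVec, Matrix.one_mulVec,
      dotProduct_smul, smul_eq_mul]
    linarith
  have hnn : ∀ v : Fin d → ℝ, 0 ≤ v ⬝ᵥ v := fun v => by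
    simpa using dotProduct_star_self_nonneg v
  have hinj : Function.Injective (Xᵀ * X + σ ^ 2 • 1).mulVec := by
    rw [← Matrix.coe_mulVecLin, injective_iff_map_eq_zero]
    intro v hv
    have h := hq v
    rw [Matrix.mulVecLin_apply] at hv
    rw [hv, dotProduct_zero] at h
    exact dotProduct_self_eq_zero.1 (le_antisymm (nonpos_of_mul_nonpos_right h hc) (hnn v))
  obtain ⟨w, hw⟩ := Matrix.mulVec_surjective_iff_isUnit.2
    (Matrix.mulVec_injective_iff_isUnit.1 hinj) x
  have hw0 : w ≠ 0 := by
    rintro rfl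
    exact hx (by simpa using hw.symm)
  have hww : 0 < w ⬝ᵥ w := lt_of_le_of_ne (hnn w) fun h => hw0 (dotProduct_self_eq_zero.1 h.symm)
  have hqw := hq w
  rw [hw] at hqw
  have hs : 0 < w ⬝ᵥ x := lt_of_lt_of_le (by positivity) hqw
  refine ⟨w, hw, hs, ?_⟩
  have hCS : (w ⬝ᵥ x) ^ 2 ≤ (w ⬝ᵥ w) * (x ⬝ᵥ x) := by
    simpa [dotProduct, sq] using Finset.sum_mul_sq_le_sq_mul_sq Finset.univ w x
  rw [le_div_iff₀ hc]
  have h1 : (w ⬝ᵥ x) ^ 2 * (σ ^ 2 + lamBar) ≤ (w ⬝ᵥ x) * (x ⬝ᵥ x) :=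
    calc (w ⬝ᵥ x) ^ 2 * (σ ^ 2 + lamBar)
        ≤ (w ⬝ᵥ w) * (x ⬝ᵥ x) * (σ ^ 2 + lamBar) := by gcongr
      _ = ((σ ^ 2 + lamBar) * (w ⬝ᵥ w)) * (x ⬝ᵥ x) := by ring
      _ ≤ _ := mul_le_mul_of_nonneg_right hqw (hnn x)
  refine le_of_mul_le_mul_left ?_ hs
  linarith

lemma renyiDiv_self {Ω : Type*} [MeasurableSpace Ω] (α : ℝ) (P : Measure Ω)
    [IsProbabilityMeasure P] : renyiDiv α P P = 0 := by
  rw [renyiDiv, integral_congr_ae (g := fun _ => (1 : ℝ))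
    (by filter_upwards [P.rnDeriv_self] with x hx; simp [hx])]
  simp

lemma phi_eq (α k ζ : ℝ) : phi α k ζ
    = k / (2 * (α - 1)) * (α * Real.log (1 - ζ⁻¹) - Real.log (1 - α * ζ⁻¹)) := by
  rw [phi, one_div, ← div_eq_mul_inv]
  ring

/-- the Rényi-DP bound for the Gaussian mixing mechanism. -/
theorem gaussMix_renyiDiv_le_phi {n d : ℕ} (X : Matrix (Fin n) (Fin d) ℝ)
    (CX lamBar σ γ : ℝ) (k : ℕ) (hk : 1 ≤ k)
    (hCX : 0 < CX)
    (hrow : ∀ i, Real.sqrt (∑ j, X i j ^ 2) ≤ CX)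
    (hlamBar : 0 ≤ lamBar)
    (hlam : lamBar ≤ lamMin (Xᵀ * X))
    (hσ : 0 < σ)
    (hγ : γ = (σ ^ 2 + lamBar) / CX ^ 2)
    (hγ1 : 1 < γ)
    (i : Fin n) (X' : Matrix (Fin n) (Fin d) ℝ) (hX' : X' = X.updateRow i 0)
    (α : ℝ) (hα : α ∈ Set.Ioo 1 γ) :
    renyiDiv α (gaussMix k σ X) (gaussMix k σ X') ≤ phi α k γ ∧
      renyiDiv α (gaussMix k σ X') (gaussMix k σ X) ≤ phi α k γ := by
  obtain ⟨hα1, hαγ⟩ := hα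
  have hγ0 : 0 < γ := by linarith
  have hαz : α * γ⁻¹ < 1 := by rwa [← div_eq_mul_inv, div_lt_one hγ0]
  have hz0 : 0 < γ⁻¹ := inv_pos.2 hγ0
  have hk0 : 0 ≤ (k : ℝ) / (2 * (α - 1)) :=
    div_nonneg (Nat.cast_nonneg k) (by linarith)
  rw [phi_eq, gaussMix_eq_pi, gaussMix_eq_pi]
  by_cases hx : X i = 0
  · have hXX : X' = X := by rw [hX', ← hx, Matrix.updateRow_eq_self]
    have h0 := log_one_sub_mono hα1 le_rfl hz0.le hαz
    simp only [sub_zero, mul_zero, Real.log_one] at h0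
    rw [hXX, renyiDiv_self]
    exact ⟨mul_nonneg hk0 h0, mul_nonneg hk0 h0⟩
  obtain ⟨w, hw, hs, hsle⟩ := exists_cov_mulVec_eq hσ hlamBar X hlam (X i) hx
  set s := w ⬝ᵥ X i with hsdef
  have hxx : X i ⬝ᵥ X i ≤ CX ^ 2 := by
    have h := (Real.sqrt_le_left hCX.le).1 (hrow i)
    simpa [dotProduct, sq] using h
  have hsz : s ≤ γ⁻¹ := by
    rw [hγ, inv_div]
    exact hsle.trans (by gcongr)
  have hαs : α * s < 1 := lt_of_le_of_lt (by gcongr) hαz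
  have hs1 : 0 < 1 - s := by nlinarith
  let u₁ : NNReal := ⟨s, hs.le⟩
  let u₂ : NNReal := ⟨s * (1 - s), by positivity⟩
  have hu₁0 : 0 < u₁ := hs
  have hu₂0 : 0 < u₂ := mul_pos hs hs1
  have hc₁ : (u₁ : ℝ) = s := rfl
  have hc₂ : (u₂ : ℝ) = s * (1 - s) := rfl
  have hP := gaussMixRow_eq_map_residual σ X X w (X i) hw hs.ne' u₁ fun l => by
    rw [hc₁, ← hsdef]
    field_simp
    ring
  have hQ := gaussMixRow_eq_map_residual σ X X' w (X i) hw hs.ne' u₂ fun l => by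
    rw [hX', dotProduct_cov_updateRow_mulVec, hc₂, ← hsdef]
    field_simp
    ring
  have ha : (s⁻¹ • X i) ⬝ᵥ w = 1 := by
    rw [smul_dotProduct, dotProduct_comm, ← hsdef, smul_eq_mul, inv_mul_cancel₀ hs.ne']
  have hρ := ae_gaussMixRowResidual σ X w _ ha
  have hr : (u₂ : ℝ) / u₁ = 1 - s := by
    rw [hc₁, hc₂]
    field_simp
  have hr' : (u₁ : ℝ) / u₂ = (1 - s)⁻¹ := by rw [← hr, inv_div]
  have e₁ : α * (1 - s) - (α - 1) = 1 - α * s := by ring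
  have e₂ : α * (1 - s)⁻¹ - (α - 1) = (1 + (α - 1) * s) * (1 - s)⁻¹ := by
    field_simp
    ring
  have hpos : 0 < 1 + (α - 1) * s := by nlinarith
  have hmono := log_one_sub_mono hα1 hs.le hsz hαz
  rw [hP, hQ]
  constructor
  · rw [renyiDiv_pi_map_add_smul _ (dotProductDual w) _ ha hρ hu₁0 hu₂0 k α
      (by rw [hr, e₁]; linarith), hr, e₁]
    exact mul_le_mul_of_nonneg_left hmono hk0
  · rw [renyiDiv_pi_map_add_smul _ (dotProductDual w) _ ha hρ hu₂0 hu₁0 k α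
      (by rw [hr', e₂]; positivity), hr', e₂, Real.log_mul hpos.ne' (by positivity), Real.log_inv]
    refine mul_le_mul_of_nonneg_left ?_ hk0
    have := log_one_sub_reverse_le hα1 hs.le hαs
    linarith
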